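/- Suppose k_i = k for all i ∈ [n]. Then for any 1 ≤ r ≤ n·M_w, the number of x ∈ 𝔽_q^N with w_{(P,w,π)}(x) = r is |A_r| = Σ_{i=1}^{n} Σ_{j=1}^{i} Σ_{I ∈ 𝓘_j^i} Σ_{(b_1,…,b_j) ∈ PRT_{i−j}[r] having exactly j parts} q^{k(i−j)} · Π_{s=1}^{l} |D_{t_s}^k|^{r_s} · C(j − (r_1+r_2+⋯+r_{s−1}), r_s), where t_1,…,t_l are the distinct values among the parts b_1,…,b_j, r_s is the multiplicity of t_s (so r_1+⋯+r_l = j), r_0 = 0, and C(a,b) denotes the binomial coefficient. -/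

import Mathlib

open scoped Classical

noncomputable section

variable {F : Type*} [Field F] [Fintype F]
variable {ι : Type*} [Fintype ι] [PartialOrder ι]

/-- The block weight induced by `w`: the maximum of the weights of the coordinates. -/
def blockWt (w : F → ℕ) {m : ℕ} (v : Fin m → F) : ℕ :=
  Finset.univ.sup fun t => w (v t)

/-- `M_w`, the maximum weight of an element of `F`. -/
def maxWt (w : F → ℕ) : ℕ := Finset.univ.sup w

/-- `D_r = {α ∈ F : w(α) = r}`. -/
def Dset (w : F → ℕ) (r : ℕ) : Finset F := Finset.univ.filter fun a => w a = r

/-- `D_r^k = {v ∈ F^k : w̃^k(v) = r}`. -/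
def Dk (w : F → ℕ) (m r : ℕ) : Finset (Fin m → F) :=
  Finset.univ.filter fun v => blockWt w v = r

/-- The order ideal (down-set) of the poset generated by a finite set `A`. -/
def genIdeal (A : Finset ι) : Finset ι := Finset.univ.filter fun i => ∃ j ∈ A, i ≤ j

/-- The set of maximal elements of a finite set `I`. -/
def maxElems (I : Finset ι) : Finset ι := I.filter fun i => ∀ j ∈ I, i ≤ j → j = i

/-- `I` is an order ideal (down-set) of the poset. -/
def IsIdeal (I : Finset ι) : Prop := ∀ a b : ι, a ≤ b → b ∈ I → a ∈ I

/-- The collection `𝓘_j^i` of ideals of cardinality `i` with exactly `j` maximal elements. -/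
def idealsWithMax (ι : Type*) [Fintype ι] [PartialOrder ι] (j i : ℕ) : Finset (Finset ι) :=
  Finset.univ.filter fun I => IsIdeal I ∧ I.card = i ∧ (maxElems I).card = j

/-- The π-support of a block vector. -/
def suppPi (k : ι → ℕ) (x : ∀ i, Fin (k i) → F) : Finset ι :=
  Finset.univ.filter fun i => x i ≠ 0

/-- The `(P,w,π)`-weight. -/
def wtP (w : F → ℕ) (k : ι → ℕ) (x : ∀ i, Fin (k i) → F) : ℕ :=
  ∑ i ∈ maxElems (genIdeal (suppPi k x)), blockWt w (x i)
    + maxWt w * ((genIdeal (suppPi k x)) \ maxElems (genIdeal (suppPi k x))).card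

/-- The `(P,w,π)`-distance. -/
def dP (w : F → ℕ) (k : ι → ℕ) (x y : ∀ i, Fin (k i) → F) : ℕ := wtP w k (x - y)

/-- `PRT_m[r]` restricted to partitions with exactly `j` parts: partitions of `r - m·M_w`
into parts each in `{1,…,R}`, with between `1` and `n - m` parts, and exactly `j` parts. -/
def PRTparts (n R m r j : ℕ) : Finset (Nat.Partition (r - m * R)) :=
  Finset.univ.filter fun p => p.parts.card = j ∧ (∀ x ∈ p.parts, x ≤ R) ∧
    1 ≤ p.parts.card ∧ p.parts.card ≤ n - m

theorem count_lemma {V : Type*} [Fintype V] (f : V → ℕ) (n : ℕ) :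
    ∀ (m : Multiset ℕ), m.card = n → ∀ (T : Finset ι) (C : ι → Finset V), T.card = m.card →
    (∀ i ∈ T, C i = Finset.univ) →
    ((Fintype.piFinset C).filter fun x => T.val.map (fun i => f (x i)) = m).card =
      (∏ i ∈ Finset.univ \ T, (C i).card) *
      ∏ t ∈ m.toFinset, ((Finset.univ.filter fun v => f v = t).card ^ m.count t *
        Nat.choose (m.card - Multiset.countP (fun x => t < x) m) (m.count t)) := by
  induction n using Nat.strong_induction_on with
  | _ n ih =>
  intro m hm T C hT hC
  by_cases h0 : m = 0
  · subst h0
    have : T = ∅ := by simpa using hT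
    subst this
    simp
  · have hne : m.toFinset.Nonempty := by
      rwa [Multiset.toFinset_nonempty]
    obtain ⟨t, ht, htmax⟩ := Finset.exists_max_image m.toFinset id hne
    simp only [id, Multiset.mem_toFinset] at ht htmax
    set m' := m.filter (fun x => x ≠ t) with hm'
    set c := m.count t with hc
    have hcpos : 0 < c := Multiset.count_pos.2 ht
    have hsplit : m = Multiset.replicate c t + m' := by
      rw [hm', hc, ← Multiset.filter_eq' m t]
      exact (Multiset.filter_add_not (fun x => x = t) m).symm
    have hcard : m.card = c + m'.card := by
      conv_lhs => rw [hsplit]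
      simp
    have htm' : t ∉ m' := by simp [hm']
    have key : ((Fintype.piFinset C).filter fun x => T.val.map (fun i => f (x i)) = m) =
        (T.powersetCard c).biUnion fun S =>
          ((Fintype.piFinset (fun i => if i ∈ S then Finset.univ.filter (fun v => f v = t) else C i)).filter
            fun x => (T \ S).val.map (fun i => f (x i)) = m') := by
      ext x
      simp only [Finset.mem_filter, Fintype.mem_piFinset, Finset.mem_biUnion,
        Finset.mem_powersetCard]
      constructor
      · rintro ⟨hx, hxm⟩
        refine ⟨T.filter (fun i => f (x i) = t), ⟨Finset.filter_subset _ _, ?_⟩, ?_, ?_⟩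
        · rw [hc, ← hxm, Multiset.count_map]
          simp only [Finset.card_def, Finset.filter_val]
          congr 1
          apply Multiset.filter_congr
          intro i _
          exact eq_comm
        · intro i
          split_ifs with hi
          · simpa using (Finset.mem_filter.1 hi).2
          · exact hx i
        · rw [hm', ← hxm, Multiset.filter_map]
          congr 1
          have : T \ T.filter (fun i => f (x i) = t) = T.filter (fun i => f (x i) ≠ t) := by
            ext i
            simp only [Finset.mem_sdiff, Finset.mem_filter]
            tauto
          rw [this]
          rfl
      · rintro ⟨S, ⟨hST, hSc⟩, hx, hxm⟩
        constructor
        · intro i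
          by_cases hi : i ∈ T
          · simp [hC i hi]
          · have := hx i
            rwa [if_neg (fun h => hi (hST h))] at this
        · rw [hsplit, ← hxm]
          have h1 : T.val = S.val + (T \ S).val := by
            rw [Finset.sdiff_val, add_comm, tsub_add_cancel_of_le (Finset.val_le_iff.2 hST)]
          rw [h1, Multiset.map_add]
          congr 1
          rw [Multiset.eq_replicate]
          refine ⟨by simpa using hSc, ?_⟩
          intro b hb
          obtain ⟨i, hi, rfl⟩ := Multiset.mem_map.1 hb
          have := hx i
          rw [if_pos (by simpa using hi)] at this
          simpa using this
    have hdisj : ∀ S ∈ T.powersetCard c, ∀ S' ∈ T.powersetCard c, S ≠ S' → Disjoint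
        ((Fintype.piFinset (fun i => if i ∈ S then Finset.univ.filter (fun v => f v = t) else C i)).filter
            fun x => (T \ S).val.map (fun i => f (x i)) = m')
        ((Fintype.piFinset (fun i => if i ∈ S' then Finset.univ.filter (fun v => f v = t) else C i)).filter
            fun x => (T \ S').val.map (fun i => f (x i)) = m') := by
      intro S hS S' hS' hne
      rw [Finset.disjoint_left]
      intro x hx hx'
      apply hne
      have aux : ∀ S ∈ T.powersetCard c, x ∈ ((Fintype.piFinset (fun i => if i ∈ S then Finset.univ.filter (fun v => f v = t) else C i)).filter
            fun x => (T \ S).val.map (fun i => f (x i)) = m') →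
            S = T.filter (fun i => f (x i) = t) := by
        intro S hS hx
        simp only [Finset.mem_filter, Fintype.mem_piFinset, Finset.mem_powersetCard] at hx hS
        obtain ⟨hx, hxm⟩ := hx
        ext i
        constructor
        · intro hi
          have := hx i
          rw [if_pos hi] at this
          exact Finset.mem_filter.2 ⟨hS.1 hi, by simpa using this⟩
        · intro hi
          obtain ⟨hi, hft⟩ := Finset.mem_filter.1 hi
          by_contra hn
          apply htm'
          rw [← hxm, ← hft]
          exact Multiset.mem_map_of_mem (fun i => f (x i)) (Finset.mem_sdiff.2 ⟨hi, hn⟩)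
      rw [aux S hS hx, aux S' hS' hx']
    have htf : m.toFinset = insert t m'.toFinset := by
      ext a
      simp only [Multiset.mem_toFinset, Finset.mem_insert, hm', Multiset.mem_filter]
      constructor
      · intro h; by_cases hh : a = t
        · exact Or.inl hh
        · exact Or.inr ⟨h, hh⟩
      · rintro (h | h)
        · exact h ▸ ht
        · exact h.1
    have hct : Multiset.countP (fun x => t < x) m = 0 := by
      rw [Multiset.countP_eq_zero]
      intro a ha
      exact not_lt.2 (htmax a ha)
    rw [key, Finset.card_biUnion hdisj, htf, Finset.prod_insert (by simpa using htm'), hct]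
    have hrest : ∏ a ∈ m'.toFinset, ((Finset.univ.filter fun v => f v = a).card ^ m.count a *
        Nat.choose (m.card - Multiset.countP (fun x => a < x) m) (m.count a)) =
        ∏ a ∈ m'.toFinset, ((Finset.univ.filter fun v => f v = a).card ^ m'.count a *
        Nat.choose (m'.card - Multiset.countP (fun x => a < x) m') (m'.count a)) := by
      apply Finset.prod_congr rfl
      intro a ha
      rw [Multiset.mem_toFinset] at ha
      have hat : a ≠ t := fun h => htm' (h ▸ ha)
      have ham : a ∈ m := (Multiset.mem_filter.1 ha).1
      have h1 : m.count a = m'.count a := by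
        rw [hm', Multiset.count_filter_of_pos (p := fun x => x ≠ t) hat]
      have h2 : Multiset.countP (fun x => a < x) m = c + Multiset.countP (fun x => a < x) m' := by
        conv_lhs => rw [hsplit]
        rw [Multiset.countP_add]
        congr 1
        have : Multiset.countP (fun x => a < x) (Multiset.replicate c t) =
          (Multiset.replicate c t).card := by
          rw [Multiset.countP_eq_card]
          intro b hb
          rw [Multiset.eq_of_mem_replicate hb]
          exact lt_of_le_of_ne (htmax a ham) hat
        rw [this, Multiset.card_replicate]
      rw [h1, h2, hcard, Nat.add_sub_add_left]
    rw [hrest]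
    have hterm : ∀ S ∈ T.powersetCard c,
        ((Fintype.piFinset (fun i => if i ∈ S then Finset.univ.filter (fun v => f v = t) else C i)).filter
            fun x => (T \ S).val.map (fun i => f (x i)) = m').card =
        ((∏ i ∈ Finset.univ \ T, (C i).card) * (Finset.univ.filter fun v => f v = t).card ^ c) *
        ∏ a ∈ m'.toFinset, ((Finset.univ.filter fun v => f v = a).card ^ m'.count a *
        Nat.choose (m'.card - Multiset.countP (fun x => a < x) m') (m'.count a)) := by
      intro S hS
      obtain ⟨hST, hSc⟩ := Finset.mem_powersetCard.1 hS
      rw [ih m'.card (by omega) m' rfl]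
      · congr 1
        have : Finset.univ \ (T \ S) = (Finset.univ \ T) ∪ S := by
          ext i
          simp only [Finset.mem_sdiff, Finset.mem_univ, true_and, Finset.mem_union]
          tauto
        rw [this, Finset.prod_union]
        · congr 1
          · apply Finset.prod_congr rfl
            intro i hi
            rw [if_neg]
            intro h
            exact (Finset.mem_sdiff.1 hi).2 (hST h)
          · rw [← hSc, ← Finset.prod_const]
            apply Finset.prod_congr rfl
            intro i hi
            rw [if_pos hi]
        · rw [Finset.disjoint_left]
          intro i hi h
          exact (Finset.mem_sdiff.1 hi).2 (hST h)
      · rw [Finset.card_sdiff_of_subset hST]; omega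
      · intro i hi
        obtain ⟨h1, h2⟩ := Finset.mem_sdiff.1 hi
        simp only [if_neg h2]
        exact hC i h1
    rw [Finset.sum_congr rfl hterm, Finset.sum_const, Finset.card_powersetCard, hT, smul_eq_mul,
      Nat.sub_zero]
    ring

theorem blockWt_eq_zero (w : F → ℕ) (hw0 : ∀ a : F, w a = 0 ↔ a = 0) {m : ℕ} (v : Fin m → F) :
    blockWt w v = 0 ↔ v = 0 := by
  unfold blockWt
  rw [← bot_eq_zero, Finset.sup_eq_bot_iff]
  simp [hw0, funext_iff]

theorem blockWt_le (w : F → ℕ) {m : ℕ} (v : Fin m → F) : blockWt w v ≤ maxWt w := by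
  unfold blockWt maxWt
  exact Finset.sup_le fun t _ => Finset.le_sup (f := w) (Finset.mem_univ _)

theorem isIdeal_genIdeal (A : Finset ι) : IsIdeal (genIdeal A) := by
  intro a b hab hb
  simp only [genIdeal, Finset.mem_filter, Finset.mem_univ, true_and] at *
  obtain ⟨j, hj, hbj⟩ := hb
  exact ⟨j, hj, hab.trans hbj⟩

theorem exists_max (I : Finset ι) (i : ι) (hi : i ∈ I) : ∃ j ∈ maxElems I, i ≤ j := by
  obtain ⟨j, hij, hj⟩ := I.exists_le_maximal hi
  refine ⟨j, ?_, hij⟩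
  simp only [maxElems, Finset.mem_filter]
  exact ⟨hj.1, fun l hl hjl => le_antisymm (hj.2 hl hjl) hjl⟩

theorem genIdeal_iff (A I : Finset ι) (hI : IsIdeal I) :
    genIdeal A = I ↔ A ⊆ I ∧ maxElems I ⊆ A := by
  constructor
  · rintro rfl
    constructor
    · intro i hi
      simp only [genIdeal, Finset.mem_filter, Finset.mem_univ, true_and]
      exact ⟨i, hi, le_rfl⟩
    · intro i hi
      simp only [maxElems, Finset.mem_filter] at hi
      obtain ⟨hi, hmax⟩ := hi
      have hi' := hi
      simp only [genIdeal, Finset.mem_filter, Finset.mem_univ, true_and] at hi'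
      obtain ⟨j, hj, hij⟩ := hi'
      have : j ∈ genIdeal A := by
        simp only [genIdeal, Finset.mem_filter, Finset.mem_univ, true_and]
        exact ⟨j, hj, le_rfl⟩
      rw [← hmax j this hij]; exact hj
  · rintro ⟨h1, h2⟩
    ext i
    simp only [genIdeal, Finset.mem_filter, Finset.mem_univ, true_and]
    constructor
    · rintro ⟨j, hj, hij⟩
      exact hI i j hij (h1 hj)
    · intro hi
      obtain ⟨j, hj, hij⟩ := exists_max I i hi
      exact ⟨j, h2 hj, hij⟩

theorem ideal_count (w : F → ℕ) (hw0 : ∀ a : F, w a = 0 ↔ a = 0) (k : ℕ)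
    (I : Finset ι) (hI : IsIdeal I) (m : Multiset ℕ) (hm0 : ∀ a ∈ m, 0 < a)
    (hm : m.card = (maxElems I).card) :
    (Finset.univ.filter fun x : ∀ _ : ι, Fin k → F =>
      genIdeal (suppPi (fun _ => k) x) = I ∧
        (maxElems I).val.map (fun i => blockWt w (x i)) = m).card =
    Fintype.card F ^ (k * (I.card - (maxElems I).card)) *
      ∏ t ∈ m.toFinset, ((Dk w k t).card ^ m.count t *
        Nat.choose ((maxElems I).card - Multiset.countP (fun x => t < x) m) (m.count t)) := by
  have hsub : maxElems I ⊆ I := Finset.filter_subset _ _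
  have := count_lemma (blockWt w (m := k)) m.card m rfl (maxElems I)
    (fun i => if i ∈ I then Finset.univ else {0}) hm.symm
    (fun i hi => if_pos (hsub hi))
  have e : (Finset.univ.filter fun x : ∀ _ : ι, Fin k → F =>
      genIdeal (suppPi (fun _ => k) x) = I ∧
        (maxElems I).val.map (fun i => blockWt w (x i)) = m) =
      ((Fintype.piFinset (fun i => if i ∈ I then (Finset.univ : Finset (Fin k → F)) else {0})).filter
        fun x => (maxElems I).val.map (fun i => blockWt w (x i)) = m) := by
    ext x
    simp only [Finset.mem_filter, Fintype.mem_piFinset, Finset.mem_univ, true_and,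
      genIdeal_iff _ _ hI]
    constructor
    · rintro ⟨⟨h1, -⟩, h3⟩
      refine ⟨fun i => ?_, h3⟩
      split_ifs with hi
      · simp
      · rw [Finset.mem_singleton]
        by_contra hx
        exact hi (h1 (Finset.mem_filter.2 ⟨Finset.mem_univ _, hx⟩))
    · rintro ⟨h1, h3⟩
      refine ⟨⟨fun i hi => ?_, fun i hi => ?_⟩, h3⟩
      · by_contra hn
        have := h1 i
        rw [if_neg hn, Finset.mem_singleton] at this
        exact (Finset.mem_filter.1 hi).2 this
      · refine Finset.mem_filter.2 ⟨Finset.mem_univ _, fun h => ?_⟩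
        have h4 : blockWt w (x i) ∈ m := by
          rw [← h3]
          exact Multiset.mem_map_of_mem (fun i => blockWt w (x i)) hi
        have := hm0 _ h4
        rw [(blockWt_eq_zero w hw0 (x i)).2 h] at this
        exact lt_irrefl _ this
  rw [e, this, hm]
  congr 1
  have h5 : Finset.univ \ maxElems I = (Finset.univ \ I) ∪ (I \ maxElems I) := by
    ext i
    have := @hsub i
    simp only [Finset.mem_sdiff, Finset.mem_univ, true_and, Finset.mem_union]
    tauto
  rw [h5, Finset.prod_union, Finset.prod_eq_one, one_mul]
  · rw [pow_mul, ← Finset.card_sdiff_of_subset hsub, ← Finset.prod_const]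
    apply Finset.prod_congr rfl
    intro i hi
    rw [if_pos (Finset.mem_sdiff.1 hi).1]
    simp
  · intro i hi
    rw [if_neg (Finset.mem_sdiff.1 hi).2]
    simp
  · rw [Finset.disjoint_left]
    intro i hi h
    exact (Finset.mem_sdiff.1 hi).2 (Finset.mem_sdiff.1 h).1

theorem ideal_sum (w : F → ℕ) (hw0 : ∀ a : F, w a = 0 ↔ a = 0) (k r : ℕ)
    (I : Finset ι) (hI : IsIdeal I) (hne : I.Nonempty) :
    ((Finset.univ.filter fun x : ∀ _ : ι, Fin k → F => wtP w (fun _ => k) x = r).filter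
      fun x => genIdeal (suppPi (fun _ => k) x) = I).card =
    ∑ p ∈ PRTparts (Fintype.card ι) (maxWt w) (I.card - (maxElems I).card) r (maxElems I).card,
      Fintype.card F ^ (k * (I.card - (maxElems I).card)) *
      ∏ t ∈ p.parts.toFinset, ((Dk w k t).card ^ p.parts.count t *
        Nat.choose ((maxElems I).card - Multiset.countP (fun x => t < x) p.parts)
          (p.parts.count t)) := by
  have hsub : maxElems I ⊆ I := Finset.filter_subset _ _
  have hmne : (maxElems I).Nonempty := by
    obtain ⟨i, hi⟩ := hne
    obtain ⟨j, hj, -⟩ := exists_max I i hi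
    exact ⟨j, hj⟩
  have hcle := Finset.card_le_card hsub
  have hIle := Finset.card_le_univ I
  have hpos := hmne.card_pos
  set M := I.card - (maxElems I).card with hM
  have e : ((Finset.univ.filter fun x : ∀ _ : ι, Fin k → F => wtP w (fun _ => k) x = r).filter
      fun x => genIdeal (suppPi (fun _ => k) x) = I) =
      (PRTparts (Fintype.card ι) (maxWt w) M r (maxElems I).card).biUnion fun p =>
      (Finset.univ.filter fun x : ∀ _ : ι, Fin k → F =>
      genIdeal (suppPi (fun _ => k) x) = I ∧
        (maxElems I).val.map (fun i => blockWt w (x i)) = p.parts) := by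
    ext x
    simp only [Finset.mem_filter, Finset.mem_univ, true_and, Finset.mem_biUnion]
    constructor
    · rintro ⟨hw, hg⟩
      have hx := ((genIdeal_iff _ _ hI).1 hg).2
      unfold wtP at hw
      rw [hg, Finset.card_sdiff_of_subset hsub, ← hM, mul_comm] at hw
      refine ⟨⟨(maxElems I).val.map (fun i => blockWt w (x i)), ?_, ?_⟩, ?_, hg, rfl⟩
      · intro a ha
        obtain ⟨i, hi, rfl⟩ := Multiset.mem_map.1 ha
        apply Nat.pos_of_ne_zero
        intro h
        exact (Finset.mem_filter.1 (hx hi)).2 ((blockWt_eq_zero w hw0 _).1 h)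
      · change ∑ i ∈ maxElems I, blockWt w (x i) = _
        omega
      · simp only [PRTparts, Finset.mem_filter, Finset.mem_univ, true_and]
        refine ⟨by simp, ?_, ?_, ?_⟩
        · intro a ha
          obtain ⟨i, hi, rfl⟩ := Multiset.mem_map.1 ha
          exact blockWt_le _ _
        · simpa using hmne
        · simp only [Multiset.card_map, Finset.card_val]; omega
    · rintro ⟨p, hp, hg, hx⟩
      refine ⟨?_, hg⟩
      simp only [PRTparts, Finset.mem_filter, Finset.mem_univ, true_and] at hp
      unfold wtP
      rw [hg, Finset.card_sdiff_of_subset hsub, ← hM, mul_comm]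
      have h1 : ∑ i ∈ maxElems I, blockWt w (x i) = r - M * maxWt w := by
        rw [← p.parts_sum, ← hx]; rfl
      have h2 : 0 < ∑ i ∈ maxElems I, blockWt w (x i) := by
        apply Finset.sum_pos _ hmne
        intro i hi
        apply p.parts_pos
        rw [← hx]
        exact Multiset.mem_map_of_mem (fun i => blockWt w (x i)) hi
      omega
  rw [e, Finset.card_biUnion]
  · apply Finset.sum_congr rfl
    intro p hp
    simp only [PRTparts, Finset.mem_filter, Finset.mem_univ, true_and] at hp
    rw [ideal_count w hw0 k I hI p.parts (fun a ha => p.parts_pos ha) hp.1]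
  · intro p _ p' _ hpp
    change Disjoint _ _
    rw [Finset.disjoint_left]
    intro x hx hx'
    apply hpp
    apply Nat.Partition.ext
    rw [← (Finset.mem_filter.1 hx).2.2, ← (Finset.mem_filter.1 hx').2.2]

theorem sum_ideals (g : ℕ → ℕ → Finset ι → ℕ) :
    ∑ i ∈ Finset.Icc 1 (Fintype.card ι), ∑ j ∈ Finset.Icc 1 i,
        ∑ I ∈ idealsWithMax ι j i, g i j I =
    ∑ I ∈ Finset.univ.filter (fun I : Finset ι => IsIdeal I ∧ I.Nonempty),
      g I.card (maxElems I).card I := by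
  rw [← Finset.sum_fiberwise_of_maps_to (s := Finset.univ.filter
    (fun I : Finset ι => IsIdeal I ∧ I.Nonempty)) (t := Finset.Icc 1 (Fintype.card ι))
    (g := fun I => I.card)]
  · apply Finset.sum_congr rfl
    intro i hi
    rw [← Finset.sum_fiberwise_of_maps_to (t := Finset.Icc 1 i)
      (g := fun I => (maxElems I).card)]
    · apply Finset.sum_congr rfl
      intro j hj
      apply Finset.sum_congr
      · ext I
        simp only [idealsWithMax, Finset.mem_filter, Finset.mem_univ, true_and]
        constructor
        · rintro ⟨a, b, c⟩
          refine ⟨⟨⟨a, ?_⟩, b⟩, c⟩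
          rw [← Finset.card_pos, b]
          exact (Finset.mem_Icc.1 hi).1
        · rintro ⟨⟨⟨a, -⟩, b⟩, c⟩
          exact ⟨a, b, c⟩
      · intro I hI
        simp only [Finset.mem_filter, Finset.mem_univ, true_and] at hI
        rw [hI.2, hI.1.2]
    · intro I hI
      simp only [Finset.mem_filter, Finset.mem_univ, true_and] at hI
      obtain ⟨⟨-, l, hl⟩, rfl⟩ := hI
      obtain ⟨j, hj, -⟩ := exists_max I l hl
      exact Finset.mem_Icc.2 ⟨Finset.card_pos.2 ⟨j, hj⟩,
        Finset.card_le_card (Finset.filter_subset _ _)⟩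
  · intro I hI
    simp only [Finset.mem_filter, Finset.mem_univ, true_and] at hI
    exact Finset.mem_Icc.2 ⟨hI.2.card_pos, Finset.card_le_univ I⟩

/-- the weight distribution of the `(P,w,π)`-space when all blocks have the same
dimension `k`, expressed via partitions, the multiplicities `r_s` of their distinct parts `t_s`,
and binomial coefficients `C(j - (r_1 + ⋯ + r_{s-1}), r_s)`. -/
theorem stmt4 (w : F → ℕ) (hw0 : ∀ a : F, w a = 0 ↔ a = 0)
    (hwneg : ∀ a : F, w (-a) = w a) (hwadd : ∀ a b : F, w (a + b) ≤ w a + w b)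
    (k : ℕ) (r : ℕ) (hr1 : 1 ≤ r) (hr2 : r ≤ Fintype.card ι * maxWt w) :
    (Finset.univ.filter fun x : ∀ _ : ι, Fin k → F =>
        wtP w (fun _ => k) x = r).card =
      ∑ i ∈ Finset.Icc 1 (Fintype.card ι), ∑ j ∈ Finset.Icc 1 i,
        ∑ I ∈ idealsWithMax ι j i,
          ∑ p ∈ PRTparts (Fintype.card ι) (maxWt w) (i - j) r j,
            Fintype.card F ^ (k * (i - j)) *
              ∏ t ∈ p.parts.toFinset,
                (Dk w k t).card ^ p.parts.count t *
                  Nat.choose (j - Multiset.countP (fun x => t < x) p.parts)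
                    (p.parts.count t) := by
  rw [sum_ideals (fun i j (_ : Finset ι) => ∑ p ∈ PRTparts (Fintype.card ι) (maxWt w) (i - j) r j,
            Fintype.card F ^ (k * (i - j)) *
              ∏ t ∈ p.parts.toFinset,
                (Dk w k t).card ^ p.parts.count t *
                  Nat.choose (j - Multiset.countP (fun x => t < x) p.parts)
                    (p.parts.count t))]
  rw [Finset.card_eq_sum_card_fiberwise (f := fun x => genIdeal (suppPi (fun _ => k) x))
    (t := Finset.univ.filter (fun I : Finset ι => IsIdeal I ∧ I.Nonempty))]
  · apply Finset.sum_congr rfl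
    intro I hI
    simp only [Finset.mem_filter, Finset.mem_univ, true_and] at hI
    exact ideal_sum w hw0 k r I hI.1 hI.2
  · intro x hx
    simp only [Finset.coe_filter, Finset.mem_univ, true_and, Set.mem_setOf_eq] at hx ⊢
    refine ⟨isIdeal_genIdeal _, ?_⟩
    rw [Finset.nonempty_iff_ne_empty]
    intro h
    unfold wtP at hx
    rw [h] at hx
    simp [maxElems] at hx
    omega
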